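/- For every d ≥ 2 and every pair of natural numbers t, n ≥ 3 there exists a natural number h such that every finite family of more than h pairwise distinct nonempty compact convex subsets of ℝ^d contains either a subfamily of t members that admit a common transversal hyperplane, or a subfamily of n members in convex position. -/

import Mathlib

open Set

noncomputable section

/-- The Euclidean plane. -/
abbrev Plane : Type := EuclideanSpace ℝ (Fin 2)

/-- The 2×2 determinant of two plane vectors. -/
def det2 (u v : Plane) : ℝ := u 0 * v 1 - u 1 * v 0

/-- A convex body in the plane: nonempty, compact and convex. -/
def ConvexBody2 (A : Set Plane) : Prop := A.Nonempty ∧ IsCompact A ∧ Convex ℝ A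

/-- A family of sets is in convex position if removing any member changes the
convex hull of the union of the family. -/
def ConvexPos (F : Set (Set Plane)) : Prop :=
  ∀ A ∈ F, convexHull ℝ (⋃₀ F) ≠ convexHull ℝ (⋃₀ (F \ {A}))

/-- A family is in general position if every 3-element subfamily is in convex position. -/
def GenPos (F : Set (Set Plane)) : Prop :=
  ∀ G ⊆ F, G.ncard = 3 → ConvexPos G

/-- Two sets are noncrossing if both set differences are connected. -/
def NoncrossingPair (A B : Set Plane) : Prop := IsConnected (A \ B) ∧ IsConnected (B \ A)

/-- Two convex bodies are tangent if they intersect but their interiors are disjoint. -/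
def TangentBodies (A B : Set Plane) : Prop :=
  (A ∩ B).Nonempty ∧ interior A ∩ interior B = ∅

/-- The line `{x | f x = c}` (for `f ≠ 0`) is tangent to `A`:
it meets `A` and `A` lies in one of the two closed half-planes it bounds. -/
def TangentLineTo (f : Plane →ₗ[ℝ] ℝ) (c : ℝ) (A : Set Plane) : Prop :=
  (∃ x ∈ A, f x = c) ∧ ((∀ x ∈ A, f x ≤ c) ∨ (∀ x ∈ A, c ≤ f x))

/-- No line is tangent to three distinct members of the family. -/
def NoTripleTangentLine (F : Set (Set Plane)) : Prop :=
  ∀ f : Plane →ₗ[ℝ] ℝ, f ≠ 0 → ∀ c : ℝ, ∀ A ∈ F, ∀ B ∈ F, ∀ C ∈ F,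
    A ≠ B → B ≠ C → A ≠ C →
    ¬ (TangentLineTo f c A ∧ TangentLineTo f c B ∧ TangentLineTo f c C)

/-- The ordered triple `(A₁, A₂, A₃)` is counterclockwise oriented. -/
def CCWOriented (A₁ A₂ A₃ : Set Plane) : Prop :=
  ∃ a₁ ∈ A₁ ∩ frontier (convexHull ℝ (A₁ ∪ A₂ ∪ A₃)),
  ∃ a₂ ∈ A₂ ∩ frontier (convexHull ℝ (A₁ ∪ A₂ ∪ A₃)),
  ∃ a₃ ∈ A₃ ∩ frontier (convexHull ℝ (A₁ ∪ A₂ ∪ A₃)),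
    0 < det2 (a₂ - a₁) (a₃ - a₁)

/-- The ordered triple `(A₁, A₂, A₃)` is clockwise oriented. -/
def CWOriented (A₁ A₂ A₃ : Set Plane) : Prop :=
  ∃ a₁ ∈ A₁ ∩ frontier (convexHull ℝ (A₁ ∪ A₂ ∪ A₃)),
  ∃ a₂ ∈ A₂ ∩ frontier (convexHull ℝ (A₁ ∪ A₂ ∪ A₃)),
  ∃ a₃ ∈ A₃ ∩ frontier (convexHull ℝ (A₁ ∪ A₂ ∪ A₃)),
    det2 (a₂ - a₁) (a₃ - a₁) < 0

/-- An affine line in the plane: an affine subspace with 1-dimensional direction. -/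
def IsLine (L : AffineSubspace ℝ Plane) : Prop := Module.finrank ℝ L.direction = 1

/-- `L` is a transversal line of the family `F`. -/
def TransversalLine (L : AffineSubspace ℝ Plane) (F : Set (Set Plane)) : Prop :=
  IsLine L ∧ ∀ A ∈ F, ((L : Set Plane) ∩ A).Nonempty

/-
Project everything along a pencil of functionals `ψ - s φ`. Ramsey's theorem on pairs yields either
`t` bodies whose `φ`-images pairwise meet, hence share a value of `φ`, or many bodies with pairwise
disjoint `φ`-images. For the latter the functions `s ↦ max_A (ψ - s φ)` form a pseudoline
arrangement: any two of them cross only once. Colour a triple of bodies by whether each of its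
members is the strict maximum of some `ψ - s φ`, and likewise for minima. By Helly's theorem on the
line, a family all of whose triples have this property has it itself, so is in convex position. If
no triple has either property, then for every `s` the `(ψ - s φ)`-images of the bodies are disjoint
only in one direction: always upwards or always downwards along the `φ`-order. Both alternatives
are closed in `s` and both occur, so by connectedness some `s` satisfies both, and for it the
images pairwise meet.
-/

section Ramsey

universe v

open scoped Finset

theorem forall_insert_of_forall_subset_erase {α : Type*} [DecidableEq α] {r : ℕ}
    {q : Finset α → Prop} {v : α} {S T : Finset α} (hTS : T ⊆ S)
    (hS : ∀ e ⊆ S, #e = r → q (insert v e)) (hT : ∀ e ⊆ T, #e = r + 1 → q e) :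
    ∀ e ⊆ insert v T, #e = r + 1 → q e := by
  intro e he hcard
  by_cases hv : v ∈ e
  · rw [← Finset.insert_erase hv]
    exact hS _ ((Finset.subset_insert_iff.mp he).trans hTS) (by simp [hv, hcard])
  · exact hT e ((Finset.subset_insert_iff_of_notMem hv).mp he) hcard

theorem exists_ramsey_number (r a b : ℕ) :
    ∃ N, ∀ {α : Type v} (S : Finset α) (p : Finset α → Prop), N ≤ #S →
      (∃ T ⊆ S, #T = a ∧ ∀ e ⊆ T, #e = r → p e) ∨
      (∃ T ⊆ S, #T = b ∧ ∀ e ⊆ T, #e = r → ¬ p e) := by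
  classical
  induction r generalizing a b with
  | zero =>
    refine ⟨max a b, fun S p hS => ?_⟩
    by_cases hp : p ∅
    · obtain ⟨T, hTS, hT⟩ := Finset.exists_subset_card_eq (le_of_max_le_left hS)
      exact .inl ⟨T, hTS, hT, fun e _ he => Finset.card_eq_zero.mp he ▸ hp⟩
    · obtain ⟨T, hTS, hT⟩ := Finset.exists_subset_card_eq (le_of_max_le_right hS)
      exact .inr ⟨T, hTS, hT, fun e _ he => Finset.card_eq_zero.mp he ▸ hp⟩
  | succ r ramsey =>
    induction a generalizing b with
    | zero => exact ⟨0, fun S p _ => .inl ⟨∅, by simp, rfl, by simp +contextual⟩⟩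
    | succ a iha =>
      induction b with
      | zero => exact ⟨0, fun S p _ => .inr ⟨∅, by simp, rfl, by simp +contextual⟩⟩
      | succ b ihb =>
        obtain ⟨Na, hNa⟩ := iha (b + 1)
        obtain ⟨Nb, hNb⟩ := ihb
        obtain ⟨M, hM⟩ := ramsey Na Nb
        refine ⟨M + 1, fun S p hS => ?_⟩
        obtain ⟨v, hv⟩ : S.Nonempty := Finset.card_pos.mp (by omega)
        have extend {R T : Finset _} (hR : R ⊆ S.erase v) (hT : T ⊆ R) :
            insert v T ⊆ S ∧ #(insert v T) = #T + 1 :=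
          have hTv := hT.trans hR
          ⟨Finset.insert_subset hv (hTv.trans (Finset.erase_subset _ _)),
            Finset.card_insert_of_notMem fun h => Finset.notMem_erase v S (hTv h)⟩
        obtain ⟨R, hRS, hR, hlink⟩ | ⟨R, hRS, hR, hlink⟩ :=
          hM (S.erase v) (fun e => p (insert v e)) (by rw [Finset.card_erase_of_mem hv]; omega)
        · obtain ⟨T, hTR, hT, hp⟩ | ⟨T, hTR, hT, hp⟩ := hNa R p hR.ge
          · exact .inl ⟨insert v T, (extend hRS hTR).1, by rw [(extend hRS hTR).2, hT],
              forall_insert_of_forall_subset_erase hTR hlink hp⟩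
          · exact .inr ⟨T, (hTR.trans hRS).trans (Finset.erase_subset _ _), hT, hp⟩
        · obtain ⟨T, hTR, hT, hp⟩ | ⟨T, hTR, hT, hp⟩ := hNb R p hR.ge
          · exact .inl ⟨T, (hTR.trans hRS).trans (Finset.erase_subset _ _), hT, hp⟩
          · exact .inr ⟨insert v T, (extend hRS hTR).1, by rw [(extend hRS hTR).2, hT],
              forall_insert_of_forall_subset_erase (q := fun e => ¬ p e) hTR hlink hp⟩

end Ramsey

section Real

theorem exists_forall_mem_of_pairwise_inter_nonempty {ι : Type*} {s : Finset ι} {F : ι → Set ℝ}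
    (hconv : ∀ i ∈ s, Convex ℝ (F i)) (hinter : ∀ i ∈ s, ∀ j ∈ s, (F i ∩ F j).Nonempty) :
    ∃ x, ∀ i ∈ s, x ∈ F i := by
  classical
  suffices (⋂ i ∈ s, F i).Nonempty by simpa [Set.Nonempty] using this
  refine Convex.helly_theorem' (𝕜 := ℝ) hconv fun I hI hcard => ?_
  rw [Module.finrank_self] at hcard
  obtain ⟨i, j, hij⟩ | rfl : (∃ i j, I = {i, j}) ∨ I = ∅ := by
    interval_cases h : I.card
    · exact .inr (Finset.card_eq_zero.mp h)
    · obtain ⟨i, rfl⟩ := Finset.card_eq_one.mp h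
      exact .inl ⟨i, i, by simp⟩
    · obtain ⟨i, j, -, rfl⟩ := Finset.card_eq_two.mp h
      exact .inl ⟨i, j, rfl⟩
  · subst hij
    simpa using hinter i (hI (by simp)) j (hI (by simp))
  · simp

theorem forall_le_or_forall_le_of_forall_triple {ι α : Type*} [LinearOrder α] {T : Set ι}
    {r : ι → ι → Prop} {l u : ι → α} (hr : T.Pairwise fun i j => r i j ∨ r j i)
    (hlu : ∀ i ∈ T, l i ≤ u i)
    (hu : ∀ i ∈ T, ∀ j ∈ T, ∀ k ∈ T, r i j → r j k → u j ≤ u i ∨ u j ≤ u k)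
    (hl : ∀ i ∈ T, ∀ j ∈ T, ∀ k ∈ T, r i j → r j k → l i ≤ l j ∨ l k ≤ l j) :
    (∀ i ∈ T, ∀ j ∈ T, r i j → l j ≤ u i) ∨ (∀ i ∈ T, ∀ j ∈ T, r i j → l i ≤ u j) := by
  by_contra! ⟨⟨i, hi, j, hj, hij, hlt⟩, p, hp, q, hq, hpq, hlt'⟩
  have hli := hlu i hi
  have hlj := hlu j hj
  have hlp := hlu p hp
  have hlq := hlu q hq
  rcases lt_or_ge (u i) (l p) with hip | hpi
  · rcases hr hi hp (by rintro rfl; order) with h | h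
    · rcases hu i hi p hp q hq h hpq with h' | h' <;> order
    · rcases hl p hp i hi j hj h hij with h' | h' <;> order
  · rcases hr hj hq (by rintro rfl; order) with h | h
    · rcases hu i hi j hj q hq hij h with h' | h' <;> order
    · rcases hl p hp q hq j hj hpq h with h' | h' <;> order

theorem exists_forall_le_and_le {X ι α : Type*} [TopologicalSpace X] [PreconnectedSpace X]
    [TopologicalSpace α] [Preorder α] [OrderClosedTopology α] {T : Set ι} {r : ι → ι → Prop}
    {l u : ι → X → α} (hl : ∀ i, Continuous (l i)) (hu : ∀ i, Continuous (u i))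
    (h : ∀ x, (∀ i ∈ T, ∀ j ∈ T, r i j → l j x ≤ u i x) ∨
      (∀ i ∈ T, ∀ j ∈ T, r i j → l i x ≤ u j x))
    (hup : ∃ x, ∀ i ∈ T, ∀ j ∈ T, r i j → l j x ≤ u i x)
    (hdown : ∃ x, ∀ i ∈ T, ∀ j ∈ T, r i j → l i x ≤ u j x) :
    ∃ x, ∀ i ∈ T, ∀ j ∈ T, r i j → l j x ≤ u i x ∧ l i x ≤ u j x := by
  let up : Set X := {x | ∀ i ∈ T, ∀ j ∈ T, r i j → l j x ≤ u i x}
  let down : Set X := {x | ∀ i ∈ T, ∀ j ∈ T, r i j → l i x ≤ u j x}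
  have hup_closed : IsClosed up := by
    simp only [up, ofPred_forall]
    exact isClosed_biInter fun i _ => isClosed_biInter fun j _ => isClosed_iInter fun _ =>
      isClosed_le (hl j) (hu i)
  have hdown_closed : IsClosed down := by
    simp only [down, ofPred_forall]
    exact isClosed_biInter fun i _ => isClosed_biInter fun j _ => isClosed_iInter fun _ =>
      isClosed_le (hl i) (hu j)
  obtain ⟨x, -, hx_up, hx_down⟩ := isPreconnected_closed_iff.mp isPreconnected_univ up down
    hup_closed hdown_closed (fun x _ => h x) (by rwa [univ_inter]) (by rwa [univ_inter])
  exact ⟨x, fun i hi j hj hij => ⟨hx_up i hi j hj hij, hx_down i hi j hj hij⟩⟩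

end Real

open TopologicalSpace Filter

section NonemptyCompacts

open scoped Finset

variable {E : Type*} [TopologicalSpace E]

theorem exists_finset_nonemptyCompacts_image_eq {F : Set (Set E)} (hF : F.Finite)
    (h : ∀ A ∈ F, A.Nonempty ∧ IsCompact A) :
    ∃ T : Finset (NonemptyCompacts E), (↑) '' (T : Set (NonemptyCompacts E)) = F := by
  have hrange : F ⊆ range ((↑) : NonemptyCompacts E → Set E) := fun A hA =>
    ⟨⟨⟨A, (h A hA).2⟩, (h A hA).1⟩, rfl⟩
  obtain ⟨𝒦, rfl⟩ := subset_range_iff_exists_image_eq.mp hrange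
  have h𝒦 : 𝒦.Finite := hF.of_finite_image SetLike.coe_injective.injOn
  exact ⟨h𝒦.toFinset, by rw [h𝒦.coe_toFinset]⟩

theorem ncard_image_coe_nonemptyCompacts (S : Finset (NonemptyCompacts E)) :
    ((↑) '' (S : Set (NonemptyCompacts E)) : Set (Set E)).ncard = #S := by
  rw [ncard_image_of_injective _ SetLike.coe_injective, ncard_coe_finset]

end NonemptyCompacts

section SupportFn

variable {E : Type*} [AddCommGroup E] [Module ℝ E] [TopologicalSpace E]

/-- The support function `f ↦ max_K f` of a nonempty compact set `K`. The minimum of `f` on `K` is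
written `-supportFn K (-f)`. -/
def supportFn (K : NonemptyCompacts E) (f : E →L[ℝ] ℝ) : ℝ := sSup (f '' K)

variable {K : NonemptyCompacts E} {f : E →L[ℝ] ℝ}

theorem le_supportFn (f : E →L[ℝ] ℝ) {x : E} (hx : x ∈ K) : f x ≤ supportFn K f :=
  le_csSup (K.isCompact.image f.continuous).bddAbove (mem_image_of_mem f hx)

theorem exists_apply_eq_supportFn (K : NonemptyCompacts E) (f : E →L[ℝ] ℝ) :
    ∃ x ∈ K, f x = supportFn K f :=
  (K.isCompact.image f.continuous).sSup_mem (K.nonempty.image f)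

theorem supportFn_add_smul_le (K : NonemptyCompacts E) (f g : E →L[ℝ] ℝ) {c : ℝ} (hc : 0 ≤ c) :
    supportFn K (f + c • g) ≤ supportFn K f + c * supportFn K g := by
  obtain ⟨x, hx, hfg⟩ := exists_apply_eq_supportFn K (f + c • g)
  rw [← hfg]
  exact add_le_add (le_supportFn f hx) (mul_le_mul_of_nonneg_left (le_supportFn g hx) hc)

theorem neg_supportFn_neg_le (K : NonemptyCompacts E) (f : E →L[ℝ] ℝ) :
    -supportFn K (-f) ≤ supportFn K f := by
  obtain ⟨x, hx⟩ := K.nonempty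
  exact (neg_le.mp (le_supportFn (-f) hx)).trans (le_supportFn f hx)

theorem exists_apply_eq_of_mem_Icc (hK : IsPreconnected (K : Set E)) {c : ℝ}
    (hc : c ∈ Icc (-supportFn K (-f)) (supportFn K f)) : ∃ x ∈ K, f x = c := by
  obtain ⟨x, hx, hmin⟩ := exists_apply_eq_supportFn K (-f)
  obtain ⟨y, hy, hmax⟩ := exists_apply_eq_supportFn K f
  rw [← hmin, ← hmax, neg_apply, neg_neg] at hc
  exact hK.intermediate_value hx hy f.continuous.continuousOn hc

theorem continuous_supportFn_sub_smul (K : NonemptyCompacts E) (φ ψ : E →L[ℝ] ℝ) :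
    Continuous fun s : ℝ => supportFn K (ψ - s • φ) := by
  refine K.isCompact.continuous_sSup (f := fun s x => (ψ - s • φ) x) ?_
  simp only [Function.HasUncurry.uncurry, id, sub_apply, smul_apply]
  fun_prop

theorem continuous_neg_supportFn_neg_sub_smul (K : NonemptyCompacts E) (φ ψ : E →L[ℝ] ℝ) :
    Continuous fun s : ℝ => -supportFn K (-(ψ - s • φ)) := by
  have hneg (s : ℝ) : -(ψ - s • φ) = -ψ - s • -φ := by module
  simp only [hneg]
  exact (continuous_supportFn_sub_smul K (-φ) (-ψ)).neg

end SupportFn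

section LevelTransversal

variable {E : Type*} [AddCommGroup E] [Module ℝ E] [TopologicalSpace E]
  {K L : NonemptyCompacts E} {f : E →L[ℝ] ℝ}

/-- Some level set of `f` meets every member of `𝒦`. -/
def HasLevelTransversal (f : E →L[ℝ] ℝ) (𝒦 : Set (NonemptyCompacts E)) : Prop :=
  ∃ c, ∀ K ∈ 𝒦, ∃ x ∈ K, f x = c

theorem HasLevelTransversal.neg_supportFn_neg_le {𝒦 : Set (NonemptyCompacts E)}
    (h : HasLevelTransversal f 𝒦) (hK : K ∈ 𝒦) (hL : L ∈ 𝒦) :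
    -supportFn K (-f) ≤ supportFn L f := by
  obtain ⟨c, hc⟩ := h
  obtain ⟨x, hx, rfl⟩ := hc K hK
  obtain ⟨y, hy, hxy⟩ := hc L hL
  exact (neg_le.mp (le_supportFn (-f) hx)).trans (hxy ▸ le_supportFn f hy)

theorem hasLevelTransversal_of_forall_neg_supportFn_neg_le {T : Finset (NonemptyCompacts E)}
    (hT : ∀ K ∈ T, IsPreconnected (K : Set E))
    (h : (T : Set (NonemptyCompacts E)).Pairwise fun K L => -supportFn K (-f) ≤ supportFn L f) :
    HasLevelTransversal f T := by
  rcases T.eq_empty_or_nonempty with rfl | hne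
  · exact ⟨0, by simp⟩
  · refine ⟨T.sup' hne fun K => -supportFn K (-f), fun K hK => exists_apply_eq_of_mem_Icc (hT K hK)
      ⟨Finset.le_sup' (fun K => -supportFn K (-f)) hK, Finset.sup'_le _ _ fun L hL => ?_⟩⟩
    by_cases hLK : L = K
    · exact hLK ▸ _root_.neg_supportFn_neg_le L f
    · exact h hL hK hLK

theorem hasLevelTransversal_of_pairwise {T : Finset (NonemptyCompacts E)}
    (hT : ∀ K ∈ T, IsPreconnected (K : Set E))
    (h : (T : Set (NonemptyCompacts E)).Pairwise fun K L => HasLevelTransversal f {K, L}) :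
    HasLevelTransversal f T :=
  hasLevelTransversal_of_forall_neg_supportFn_neg_le hT fun _K hK _L hL hKL =>
    (h hK hL hKL).neg_supportFn_neg_le (by simp) (by simp)

end LevelTransversal

section Pencil

variable {E : Type*} [AddCommGroup E] [Module ℝ E] [TopologicalSpace E]
  {K L M : NonemptyCompacts E} {φ : E →L[ℝ] ℝ}

/-- All values of `φ` on `K` are smaller than all values of `φ` on `L`. -/
def Precedes (φ : E →L[ℝ] ℝ) (K L : NonemptyCompacts E) : Prop :=
  supportFn K φ < -supportFn L (-φ)

theorem Precedes.supportFn_lt (h : Precedes φ K L) : supportFn K φ < supportFn L φ :=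
  lt_of_lt_of_le h (neg_supportFn_neg_le L φ)

theorem Precedes.trans (hKL : Precedes φ K L) (hLM : Precedes φ L M) : Precedes φ K M :=
  hKL.supportFn_lt.trans hLM

theorem Precedes.ne (h : Precedes φ K L) : K ≠ L := fun hKL =>
  h.supportFn_lt.ne (congrArg (supportFn · φ) hKL)

theorem precedes_or_precedes_of_not_hasLevelTransversal (hK : IsPreconnected (K : Set E))
    (hL : IsPreconnected (L : Set E)) (h : ¬ HasLevelTransversal φ {K, L}) :
    Precedes φ K L ∨ Precedes φ L K := by
  classical
  contrapose! h
  have hpair : HasLevelTransversal φ ({K, L} : Finset (NonemptyCompacts E)) := by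
    refine hasLevelTransversal_of_forall_neg_supportFn_neg_le (by simp [hK, hL]) ?_
    rw [Finset.coe_pair, pairwise_pair]
    exact fun _ => ⟨not_lt.mp h.2, not_lt.mp h.1⟩
  simpa using hpair

theorem supportFn_sub_add_le (K L : NonemptyCompacts E) (φ ψ : E →L[ℝ] ℝ) {s s' : ℝ}
    (hs : s ≤ s') :
    supportFn K (ψ - s • φ) - supportFn L (ψ - s • φ) +
        (s' - s) * (-supportFn L (-φ) - supportFn K φ) ≤
      supportFn K (ψ - s' • φ) - supportFn L (ψ - s' • φ) := by
  have hK := supportFn_add_smul_le K (ψ - s' • φ) φ (sub_nonneg.mpr hs)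
  have hL := supportFn_add_smul_le L (ψ - s • φ) (-φ) (sub_nonneg.mpr hs)
  rw [show ψ - s' • φ + (s' - s) • φ = ψ - s • φ by module] at hK
  rw [show ψ - s • φ + (s' - s) • -φ = ψ - s' • φ by module] at hL
  linarith

theorem Precedes.monotone_supportFn_sub (h : Precedes φ K L) (ψ : E →L[ℝ] ℝ) :
    Monotone fun s : ℝ => supportFn K (ψ - s • φ) - supportFn L (ψ - s • φ) := fun _ _ hs =>
  (le_add_of_nonneg_right (mul_nonneg (sub_nonneg.mpr hs) (sub_pos.mpr h).le)).trans
    (supportFn_sub_add_le K L φ ψ hs)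

theorem Precedes.eventually_atTop (h : Precedes φ K L) (ψ : E →L[ℝ] ℝ) :
    ∀ᶠ s : ℝ in atTop, supportFn L (ψ - s • φ) < supportFn K (ψ - s • φ) := by
  set D := fun s : ℝ => supportFn K (ψ - s • φ) - supportFn L (ψ - s • φ)
  have hlim : Tendsto (fun s : ℝ => D 0 + (s - 0) * (-supportFn L (-φ) - supportFn K φ))
      atTop atTop :=
    tendsto_atTop_add_const_left _ _
      ((tendsto_atTop_add_const_right _ _ tendsto_id).atTop_mul_const (sub_pos.mpr h))
  filter_upwards [hlim.eventually_gt_atTop 0, eventually_ge_atTop 0] with s hpos hs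
  exact sub_pos.mp (hpos.trans_le (supportFn_sub_add_le K L φ ψ hs))

theorem Precedes.eventually_atBot (h : Precedes φ K L) (ψ : E →L[ℝ] ℝ) :
    ∀ᶠ s : ℝ in atBot, supportFn K (ψ - s • φ) < supportFn L (ψ - s • φ) := by
  have hneg : Precedes (-φ) L K := by simpa [Precedes, lt_neg] using h
  filter_upwards [tendsto_neg_atBot_atTop.eventually (hneg.eventually_atTop ψ)] with s hs
  simpa using hs

theorem convex_setOf_supportFn_lt (h : Precedes φ K L ∨ Precedes φ L K) (ψ : E →L[ℝ] ℝ) :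
    Convex ℝ {s : ℝ | supportFn K (ψ - s • φ) < supportFn L (ψ - s • φ)} := by
  rcases h with h | h
  · simpa [sub_neg] using
      ((h.monotone_supportFn_sub ψ).monotoneOn univ).convex_lt convex_univ 0
  · simpa using ((h.monotone_supportFn_sub ψ).monotoneOn univ).convex_gt convex_univ 0

/-- Every `K ∈ 𝒦` is the strict maximum of the support functions at some member `ψ - s • φ` of the
pencil. -/
def PencilExposed (φ ψ : E →L[ℝ] ℝ) (𝒦 : Set (NonemptyCompacts E)) : Prop :=
  ∀ K ∈ 𝒦, ∃ s : ℝ, ∀ L ∈ 𝒦, L ≠ K → supportFn L (ψ - s • φ) < supportFn K (ψ - s • φ)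

theorem pencilExposed_of_forall_triple {T : Finset (NonemptyCompacts E)} {ψ : E →L[ℝ] ℝ}
    (hsep : (T : Set (NonemptyCompacts E)).Pairwise fun K L => Precedes φ K L ∨ Precedes φ L K)
    (htriple : ∀ K ∈ T, ∀ L ∈ T, ∀ M ∈ T, K ≠ L → K ≠ M → L ≠ M → PencilExposed φ ψ {K, L, M}) :
    PencilExposed φ ψ T := by
  classical
  intro K hK
  let below (L : NonemptyCompacts E) : Set ℝ :=
    {s | supportFn L (ψ - s • φ) < supportFn K (ψ - s • φ)}
  suffices ∃ s, ∀ L ∈ T.erase K, s ∈ below L from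
    this.imp fun s hs L hL hLK => hs L (Finset.mem_erase.mpr ⟨hLK, hL⟩)
  refine exists_forall_mem_of_pairwise_inter_nonempty (fun L hL => ?_) fun L hL M hM => ?_
  all_goals obtain ⟨hLK, hL⟩ := Finset.mem_erase.mp hL
  · exact convex_setOf_supportFn_lt (hsep hL hK hLK) ψ
  obtain ⟨hMK, hM⟩ := Finset.mem_erase.mp hM
  by_cases hLM : L = M
  · subst hLM
    rw [inter_self]
    rcases hsep hL hK hLK with h | h
    · exact (h.eventually_atBot ψ).exists
    · exact (h.eventually_atTop ψ).exists
  · obtain ⟨s, hs⟩ := htriple K hK L hL M hM hLK.symm hMK.symm hLM K (by simp)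
    exact ⟨s, hs L (by simp) hLK, hs M (by simp) hMK⟩

theorem pencilExposed_triple {ψ : E →L[ℝ] ℝ} {s : ℝ} (hKL : Precedes φ K L) (hLM : Precedes φ L M)
    (hK : supportFn K (ψ - s • φ) < supportFn L (ψ - s • φ))
    (hM : supportFn M (ψ - s • φ) < supportFn L (ψ - s • φ)) :
    PencilExposed φ ψ {K, L, M} := by
  have hKM := hKL.trans hLM
  rintro _ (rfl | rfl | rfl)
  · obtain ⟨s, hsL, hsM⟩ := ((hKL.eventually_atTop ψ).and (hKM.eventually_atTop ψ)).exists
    exact ⟨s, by simp [hsL, hsM]⟩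
  · exact ⟨s, by simp [hK, hM]⟩
  · obtain ⟨s, hsL, hsK⟩ := ((hLM.eventually_atBot ψ).and (hKM.eventually_atBot ψ)).exists
    exact ⟨s, by simp [hsL, hsK]⟩

theorem supportFn_le_or_le_of_not_pencilExposed {ψ : E →L[ℝ] ℝ} (hKL : Precedes φ K L)
    (hLM : Precedes φ L M) (h : ¬ PencilExposed φ ψ {K, L, M}) (s : ℝ) :
    supportFn L (ψ - s • φ) ≤ supportFn K (ψ - s • φ) ∨
      supportFn L (ψ - s • φ) ≤ supportFn M (ψ - s • φ) := by
  contrapose! h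
  exact pencilExposed_triple hKL hLM h.1 h.2

theorem neg_supportFn_neg_le_or_le_of_not_pencilExposed {ψ : E →L[ℝ] ℝ} (hKL : Precedes φ K L)
    (hLM : Precedes φ L M) (h : ¬ PencilExposed φ (-ψ) {K, L, M}) (s : ℝ) :
    -supportFn K (-(ψ - s • φ)) ≤ -supportFn L (-(ψ - s • φ)) ∨
      -supportFn M (-(ψ - s • φ)) ≤ -supportFn L (-(ψ - s • φ)) := by
  have hneg : -(ψ - s • φ) = -ψ - (-s) • φ := by module
  simpa only [neg_le_neg_iff, hneg] using supportFn_le_or_le_of_not_pencilExposed hKL hLM h (-s)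

theorem exists_forall_precedes_neg_supportFn_neg_le_left (T : Finset (NonemptyCompacts E))
    (φ ψ : E →L[ℝ] ℝ) :
    ∃ s : ℝ, ∀ K ∈ T, ∀ L ∈ T, Precedes φ K L →
      -supportFn L (-(ψ - s • φ)) ≤ supportFn K (ψ - s • φ) := by
  refine Eventually.exists (f := atTop) ?_
  simp only [Finset.eventually_all, eventually_imp_distrib_left]
  exact fun K _ L _ hKL => (hKL.eventually_atTop ψ).mono fun s hs =>
    (neg_supportFn_neg_le L _).trans hs.le

theorem exists_forall_precedes_neg_supportFn_neg_le_right (T : Finset (NonemptyCompacts E))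
    (φ ψ : E →L[ℝ] ℝ) :
    ∃ s : ℝ, ∀ K ∈ T, ∀ L ∈ T, Precedes φ K L →
      -supportFn K (-(ψ - s • φ)) ≤ supportFn L (ψ - s • φ) := by
  refine Eventually.exists (f := atBot) ?_
  simp only [Finset.eventually_all, eventually_imp_distrib_left]
  exact fun K _ L _ hKL => (hKL.eventually_atBot ψ).mono fun s hs =>
    (neg_supportFn_neg_le K _).trans hs.le

theorem exists_hasLevelTransversal_of_forall_triple {T : Finset (NonemptyCompacts E)}
    {ψ : E →L[ℝ] ℝ} (hT : ∀ K ∈ T, IsPreconnected (K : Set E))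
    (hsep : (T : Set (NonemptyCompacts E)).Pairwise fun K L => Precedes φ K L ∨ Precedes φ L K)
    (htriple : ∀ K ∈ T, ∀ L ∈ T, ∀ M ∈ T, K ≠ L → K ≠ M → L ≠ M →
      ¬ PencilExposed φ ψ {K, L, M} ∧ ¬ PencilExposed φ (-ψ) {K, L, M}) :
    ∃ s : ℝ, HasLevelTransversal (ψ - s • φ) T := by
  have hchain : ∀ K ∈ T, ∀ L ∈ T, ∀ M ∈ T, Precedes φ K L → Precedes φ L M →
      ¬ PencilExposed φ ψ {K, L, M} ∧ ¬ PencilExposed φ (-ψ) {K, L, M} :=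
    fun K hK L hL M hM hKL hLM => htriple K hK L hL M hM hKL.ne (hKL.trans hLM).ne hLM.ne
  obtain ⟨s, hs⟩ := exists_forall_le_and_le (T := T) (r := Precedes φ)
    (fun K => continuous_neg_supportFn_neg_sub_smul K φ ψ)
    (fun K => continuous_supportFn_sub_smul K φ ψ)
    (fun s => forall_le_or_forall_le_of_forall_triple hsep
      (fun K _ => neg_supportFn_neg_le K (ψ - s • φ))
      (fun K hK L hL M hM hKL hLM => supportFn_le_or_le_of_not_pencilExposed hKL hLM
        (hchain K hK L hL M hM hKL hLM).1 s)
      (fun K hK L hL M hM hKL hLM => neg_supportFn_neg_le_or_le_of_not_pencilExposed hKL hLM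
        (hchain K hK L hL M hM hKL hLM).2 s))
    (exists_forall_precedes_neg_supportFn_neg_le_left T φ ψ)
    (exists_forall_precedes_neg_supportFn_neg_le_right T φ ψ)
  refine ⟨s, hasLevelTransversal_of_forall_neg_supportFn_neg_le hT fun K hK L hL hKL => ?_⟩
  rcases hsep hK hL hKL with h | h
  · exact (hs K hK L hL h).2
  · exact (hs L hL K hK h).1

end Pencil

section ConvexPosition

variable {E : Type*} [AddCommGroup E] [Module ℝ E]

theorem convexHull_sUnion_ne_convexHull_sUnion_diff {𝒢 : Set (Set E)} {A : Set E} (hA : A ∈ 𝒢)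
    (f : E →ₗ[ℝ] ℝ) {a : E} (ha : a ∈ A) (h : ∀ B ∈ 𝒢, B ≠ A → ∀ b ∈ B, f b < f a) :
    convexHull ℝ (⋃₀ 𝒢) ≠ convexHull ℝ (⋃₀ (𝒢 \ {A})) := by
  intro heq
  have hmem : a ∈ convexHull ℝ (⋃₀ (𝒢 \ {A})) :=
    heq ▸ subset_convexHull ℝ _ (mem_sUnion_of_mem ha hA)
  have hsub : convexHull ℝ (⋃₀ (𝒢 \ {A})) ⊆ {x | f x < f a} :=
    convexHull_min (sUnion_subset fun B hB b hb => h B hB.1 hB.2 b hb)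
      (convex_halfSpace_lt f.isLinear _)
  exact lt_irrefl (f a) (hsub hmem)

theorem PencilExposed.convexHull_sUnion_ne [TopologicalSpace E] {φ ψ : E →L[ℝ] ℝ}
    {𝒦 : Set (NonemptyCompacts E)} (h : PencilExposed φ ψ 𝒦) {A : Set E}
    (hA : A ∈ (↑) '' 𝒦) :
    convexHull ℝ (⋃₀ ((↑) '' 𝒦)) ≠ convexHull ℝ (⋃₀ ((↑) '' 𝒦 \ {A})) := by
  obtain ⟨K, hK, rfl⟩ := hA
  obtain ⟨s, hs⟩ := h K hK
  obtain ⟨a, ha, hmax⟩ := exists_apply_eq_supportFn K (ψ - s • φ)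
  refine convexHull_sUnion_ne_convexHull_sUnion_diff (mem_image_of_mem _ hK)
    (ψ - s • φ : E →L[ℝ] ℝ).toLinearMap ha ?_
  rintro _ ⟨L, hL, rfl⟩ hLK b hb
  exact ((le_supportFn _ hb).trans_lt (hs L hL fun h => hLK (congrArg _ h))).trans_eq hmax.symm

end ConvexPosition

section Main

universe v

open scoped Finset

variable {E : Type v} [AddCommGroup E] [Module ℝ E] [TopologicalSpace E]

theorem exists_hasLevelTransversal_or_pencilExposed_of_pairwise_precedes (φ ψ : E →L[ℝ] ℝ)
    (t n : ℕ) :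
    ∃ N, ∀ T : Finset (NonemptyCompacts E), N ≤ #T →
      (∀ K ∈ T, IsPreconnected (K : Set E)) →
      (T : Set (NonemptyCompacts E)).Pairwise (fun K L => Precedes φ K L ∨ Precedes φ L K) →
      (∃ S ⊆ T, #S = t ∧ ∃ s : ℝ, HasLevelTransversal (ψ - s • φ) S) ∨
      (∃ S ⊆ T, #S = n ∧ (PencilExposed φ ψ S ∨ PencilExposed φ (-ψ) S)) := by
  classical
  have hcard3 {K L M : NonemptyCompacts E} {S : Finset (NonemptyCompacts E)} (hK : K ∈ S)
      (hL : L ∈ S) (hM : M ∈ S) (hKL : K ≠ L) (hKM : K ≠ M) (hLM : L ≠ M) :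
      {K, L, M} ⊆ S ∧ #{K, L, M} = 3 :=
    ⟨by simp [Finset.insert_subset_iff, *], Finset.card_eq_three.mpr ⟨K, L, M, hKL, hKM, hLM, rfl⟩⟩
  obtain ⟨N', hN'⟩ := exists_ramsey_number.{v} 3 n t
  obtain ⟨N, hN⟩ := exists_ramsey_number.{v} 3 n N'
  refine ⟨N, fun T hT hconn hsep => ?_⟩
  obtain ⟨S, hST, hS, hmax⟩ | ⟨R, hRT, hR, hmax⟩ := hN T (PencilExposed φ ψ ·) hT
  · refine .inr ⟨S, hST, hS, .inl (pencilExposed_of_forall_triple (hsep.mono hST) ?_)⟩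
    intro K hK L hL M hM hKL hKM hLM
    obtain ⟨hsub, hcard⟩ := hcard3 hK hL hM hKL hKM hLM
    simpa using hmax _ hsub hcard
  · obtain ⟨S, hSR, hS, hmin⟩ | ⟨S, hSR, hS, hmin⟩ := hN' R (PencilExposed φ (-ψ) ·) hR.ge
    · refine .inr ⟨S, hSR.trans hRT, hS, .inr (pencilExposed_of_forall_triple
        (hsep.mono (hSR.trans hRT)) ?_)⟩
      intro K hK L hL M hM hKL hKM hLM
      obtain ⟨hsub, hcard⟩ := hcard3 hK hL hM hKL hKM hLM
      simpa using hmin _ hsub hcard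
    · refine .inl ⟨S, hSR.trans hRT, hS, exists_hasLevelTransversal_of_forall_triple
        (fun K hK => hconn K (hRT (hSR hK))) (hsep.mono (hSR.trans hRT)) ?_⟩
      intro K hK L hL M hM hKL hKM hLM
      obtain ⟨hsub, hcard⟩ := hcard3 hK hL hM hKL hKM hLM
      simpa using And.intro (hmax _ (hsub.trans hSR) hcard) (hmin _ hsub hcard)

theorem exists_hasLevelTransversal_or_pencilExposed {φ ψ : E →L[ℝ] ℝ}
    (hφψ : LinearIndependent ℝ ![φ, ψ]) (t n : ℕ) :
    ∃ N, ∀ T : Finset (NonemptyCompacts E), N ≤ #T → (∀ K ∈ T, IsPreconnected (K : Set E)) →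
      (∃ S ⊆ T, #S = t ∧ ∃ f : E →L[ℝ] ℝ, f ≠ 0 ∧ HasLevelTransversal f S) ∨
      (∃ S ⊆ T, #S = n ∧ (PencilExposed φ ψ S ∨ PencilExposed φ (-ψ) S)) := by
  classical
  obtain ⟨N', hN'⟩ := exists_hasLevelTransversal_or_pencilExposed_of_pairwise_precedes φ ψ t n
  obtain ⟨N, hN⟩ := exists_ramsey_number.{v} 2 t N'
  refine ⟨N, fun T hT hconn => ?_⟩
  obtain ⟨S, hST, hS, hmeet⟩ | ⟨R, hRT, hR, hmeet⟩ := hN T (HasLevelTransversal φ ·) hT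
  · refine .inl ⟨S, hST, hS, φ, hφψ.ne_zero 0, hasLevelTransversal_of_pairwise
      (fun K hK => hconn K (hST hK)) fun K hK L hL hKL => ?_⟩
    simpa using hmeet {K, L} (Finset.insert_subset hK (Finset.singleton_subset_iff.mpr hL))
      (Finset.card_pair hKL)
  · have hsep : (R : Set (NonemptyCompacts E)).Pairwise
        fun K L => Precedes φ K L ∨ Precedes φ L K := by
      intro K hK L hL hKL
      refine precedes_or_precedes_of_not_hasLevelTransversal (hconn K (hRT hK))
        (hconn L (hRT hL)) ?_
      simpa using hmeet {K, L} (Finset.insert_subset hK (Finset.singleton_subset_iff.mpr hL))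
        (Finset.card_pair hKL)
    obtain ⟨S, hSR, hS, s, hs⟩ | ⟨S, hSR, hS, hexp⟩ :=
      hN' R hR.ge (fun K hK => hconn K (hRT hK)) hsep
    · refine .inl ⟨S, hSR.trans hRT, hS, ψ - s • φ, fun h => ?_, hs⟩
      exact one_ne_zero (LinearIndependent.pair_iff.mp hφψ (-s) 1 (by rw [← h]; module)).2
    · exact .inr ⟨S, hSR.trans hRT, hS, hexp⟩

theorem hyperplane_transversal_or_convex_position_general {φ ψ : E →L[ℝ] ℝ}
    (hφψ : LinearIndependent ℝ ![φ, ψ]) (t n : ℕ) :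
    ∃ h : ℕ, ∀ F : Set (Set E), h < F.ncard →
      (∀ A ∈ F, A.Nonempty ∧ IsCompact A ∧ IsPreconnected A) →
      (∃ G ⊆ F, G.ncard = t ∧ ∃ f : E →L[ℝ] ℝ, f ≠ 0 ∧ ∃ c, ∀ A ∈ G, ∃ x ∈ A, f x = c) ∨
      (∃ G ⊆ F, G.ncard = n ∧
        ∀ A ∈ G, convexHull ℝ (⋃₀ G) ≠ convexHull ℝ (⋃₀ (G \ {A}))) := by
  obtain ⟨N, hN⟩ := exists_hasLevelTransversal_or_pencilExposed hφψ t n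
  refine ⟨N, fun F hF hbody => ?_⟩
  obtain ⟨T, rfl⟩ := exists_finset_nonemptyCompacts_image_eq
    (finite_of_ncard_pos (Nat.zero_lt_of_lt hF)) fun A hA => ⟨(hbody A hA).1, (hbody A hA).2.1⟩
  rw [ncard_image_coe_nonemptyCompacts] at hF
  obtain ⟨S, hST, hS, f, hf, c, hc⟩ | ⟨S, hST, hS, hexp⟩ :=
    hN T hF.le fun K hK => (hbody K (mem_image_of_mem _ hK)).2.2
  · exact .inl ⟨(↑) '' (S : Set (NonemptyCompacts E)), image_mono hST,
      (ncard_image_coe_nonemptyCompacts S).trans hS, f, hf, c, forall_mem_image.mpr hc⟩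
  · exact .inr ⟨(↑) '' (S : Set (NonemptyCompacts E)), image_mono hST,
      (ncard_image_coe_nonemptyCompacts S).trans hS,
      fun A hA => hexp.elim (·.convexHull_sUnion_ne hA) (·.convexHull_sUnion_ne hA)⟩

end Main

theorem exists_affineSubspace_coe_eq_setOf_apply_eq {k V : Type*} [Field k] [AddCommGroup V]
    [Module k V] [FiniteDimensional k V] {f : V →ₗ[k] k} (hf : f ≠ 0) (c : k) :
    ∃ H : AffineSubspace k V, Module.finrank k H.direction = Module.finrank k V - 1 ∧
      (H : Set V) = {x | f x = c} := by
  obtain ⟨p, rfl⟩ := LinearMap.surjective hf c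
  refine ⟨AffineSubspace.mk' p (LinearMap.ker f), ?_, ?_⟩
  · rw [AffineSubspace.direction_mk', ← Module.Dual.finrank_ker_add_one_of_ne_zero hf,
      Nat.add_sub_cancel]
  · ext x
    simp [sub_eq_zero]

theorem linearIndependent_pair_euclideanSpace_proj {ι : Type*} [Finite ι] {i j : ι} (hij : i ≠ j) :
    LinearIndependent ℝ
      ![(EuclideanSpace.proj i : EuclideanSpace ℝ ι →L[ℝ] ℝ), EuclideanSpace.proj j] := by
  classical
  have := Fintype.ofFinite ι
  refine LinearIndependent.pair_iff.mpr fun a b hab => ⟨?_, ?_⟩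
  · simpa [hij] using DFunLike.congr_fun hab (EuclideanSpace.single i 1)
  · simpa [hij.symm] using DFunLike.congr_fun hab (EuclideanSpace.single j 1)

/-- Among sufficiently many convex bodies in `ℝ^d` there are `t` with a common
transversal hyperplane or `n` in convex position. -/
theorem hyperplane_transversal_or_convex_position :
    ∀ d t n : ℕ, 2 ≤ d → 3 ≤ t → 3 ≤ n →
    ∃ h : ℕ, ∀ F : Set (Set (EuclideanSpace ℝ (Fin d))), F.Finite → h < F.ncard →
      (∀ A ∈ F, A.Nonempty ∧ IsCompact A ∧ Convex ℝ A) →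
      (∃ G ⊆ F, G.ncard = t ∧ ∃ H : AffineSubspace ℝ (EuclideanSpace ℝ (Fin d)),
        Module.finrank ℝ H.direction = d - 1 ∧
        ∀ A ∈ G, ((H : Set (EuclideanSpace ℝ (Fin d))) ∩ A).Nonempty) ∨
      (∃ G ⊆ F, G.ncard = n ∧
        ∀ A ∈ G, convexHull ℝ (⋃₀ G) ≠ convexHull ℝ (⋃₀ (G \ {A}))) := by
  intro d t n hd _ _
  obtain ⟨h, hh⟩ := hyperplane_transversal_or_convex_position_general
    (linearIndependent_pair_euclideanSpace_proj
      (show (⟨0, by omega⟩ : Fin d) ≠ ⟨1, hd⟩ by simp)) t n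
  refine ⟨h, fun F _ hF hbody => ?_⟩
  refine (hh F hF fun A hA => (hbody A hA).imp_right (And.imp_right Convex.isPreconnected)).imp_left
    fun ⟨G, hGF, hG, f, hf, c, hc⟩ => ?_
  obtain ⟨H, hdim, hH⟩ := exists_affineSubspace_coe_eq_setOf_apply_eq
    (fun h => hf (ContinuousLinearMap.coe_injective h)) c
  refine ⟨G, hGF, hG, H, by rw [hdim, finrank_euclideanSpace_fin], fun A hA => ?_⟩
  obtain ⟨x, hx, hxc⟩ := hc A hA
  exact ⟨x, hH.symm ▸ hxc, hx⟩
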